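/- Let d ≥ 2, μ > −1/2, α > −(μ + (d+1)/2), β > −1. For each m, let {P_k^m : k ∈ ℕ_0^d, |k| = m} be an orthonormal basis of the space of orthogonal polynomials of degree m on the unit ball B^d with respect to the weight ϖ_μ(x) = (1−‖x‖²)^{μ−1/2}. Define Q_{m,k}^n(x,t) := P_{n−m}^{(m+μ+α+(d−1)/2, β)}(1−2t) · t^{m/2} · P_k^m(x/√t) for |k| = m ≤ n. Then these are polynomials of degree at most n in (x,t) that are mutually orthogonal on the solid paraboloid {(x,t) ∈ ℝ^d × ℝ : ‖x‖² ≤ t, 0 ≤ t ≤ 1} with respect to the weight W(x,t) = t^α(1−t)^β(t − ‖x‖²)^{μ−1/2}: for (n,m,k) ≠ (n',m',k'), ∫_0^1 ∫_{‖x‖² ≤ t} Q_{m,k}^n(x,t) Q_{m',k'}^{n'}(x,t) t^α(1−t)^β(t−‖x‖²)^{μ−1/2} dx dt = 0, while the integral is strictly positive when (n,m,k) = (n',m',k'). -/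

import Mathlib

/-!
The substitution `x = √t • u` maps the unit ball onto the slice `‖x‖ ≤ √t` of the paraboloid and
turns the slice integral of `Q_{m,k}^n Q_{m',k'}^{n'}` into
`P_{n-m}(1-2t) P_{n'-m'}(1-2t) t^{(m+m'+d)/2+μ-1/2}` times the ball inner product of `P_k^m` and
`P_{k'}^{m'}` (`paraboloid_slice_integral`). That inner product is zero unless `m = m'` and
`k = k'`; in this remaining case the powers of `t` add up to the Jacobi weight with parameter
`m + μ + α + (d-1)/2`, and `s = 1 - 2t` leaves a one-dimensional Jacobi integral
(`paraboloid_integral`). Orthogonality and positivity then come from `integral_jacobi_mul_eq_zero`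
and `integral_sq_jacobiWeight_pos`.

That `t^{m/2} P_k^m(x/√t)` is a polynomial amounts to `P_k^m` having the parity of `m`
(`parity_part_eq_zero`). The wrong-parity part `R(u) = (P(u) - (-1)^m P(-u)) / 2` has degree less
than `m`, so it is orthogonal to `P`, and by central symmetry of the weight to `P(-·)`; hence
`∫ R² w = 0` and `R = 0`. Homogeneous components of degree `i ≡ m` mod 2 then scale to
`t^{(m-i)/2} P_i(x)` (`exists_homogenization`).
-/

open MeasureTheory MvPolynomial Real

noncomputable section

/-- `p` is a Jacobi polynomial of degree `n` with parameters `(a, b)`. -/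
def IsJacobi (a b : ℝ) (n : ℕ) (p : Polynomial ℝ) : Prop :=
  p.degree = n ∧ ∀ k < n,
    ∫ t in Set.Ioo (-1 : ℝ) 1, p.eval t * t ^ k * (1 - t) ^ a * (1 + t) ^ b = 0

/-- The functions `Q_{m,k}^n(x,t) = P_{n−m}^{(m+μ+α+(d−1)/2,β)}(1−2t) t^{m/2} P_k^m(x/√t)`. -/
def paraboloidFun (d : ℕ) (J : ℕ → ℝ → ℝ → Polynomial ℝ)
    (Pb : ℕ → (Fin d → ℕ) → MvPolynomial (Fin d) ℝ) (μ α β : ℝ) (n m : ℕ)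
    (k : Fin d → ℕ) (x : EuclideanSpace ℝ (Fin d)) (t : ℝ) : ℝ :=
  (J (n - m) (m + μ + α + (d - 1) / 2) β).eval (1 - 2 * t) * Real.sqrt t ^ m *
    MvPolynomial.eval ((Real.sqrt t)⁻¹ • x) (Pb m k)

/-! ### Parity of orthogonal polynomials on the ball -/

lemma eval_smul_of_isHomogeneous {σ : Type*} {φ : MvPolynomial σ ℝ} {m : ℕ}
    (hφ : φ.IsHomogeneous m) (c : ℝ) (x : σ → ℝ) :
    eval (c • x) φ = c ^ m * eval x φ := by
  rw [eval_eq, eval_eq, Finset.mul_sum]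
  refine Finset.sum_congr rfl fun e he => ?_
  have h : e.degree = m := by
    have := hφ (mem_support_iff.1 he)
    rw [Finsupp.degree_eq_weight_one]
    exact this
  have : c ^ m = ∏ i ∈ e.support, c ^ e i := by
    rw [Finset.prod_pow_eq_pow_sum, ← h]; rfl
  simp only [Pi.smul_apply, smul_eq_mul, mul_pow, Finset.prod_mul_distrib, this]
  ring

lemma eq_sum_homogeneousComponent {σ : Type*} {P : MvPolynomial σ ℝ} {m : ℕ}
    (hP : P.totalDegree ≤ m) :
    P = ∑ i ∈ Finset.range (m + 1), homogeneousComponent i P := by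
  conv_lhs => rw [← sum_homogeneousComponent P]
  refine Finset.sum_subset (by intro i; simp; lia) fun i _ hi => ?_
  exact homogeneousComponent_eq_zero _ _ (by simpa using hi)

lemma continuous_eval_euclidean {d : ℕ} (P : MvPolynomial (Fin d) ℝ) :
    Continuous fun u : EuclideanSpace ℝ (Fin d) => eval (u : Fin d → ℝ) P :=
  (MvPolynomial.continuous_eval P).comp (PiLp.continuous_ofLp 2 _)

lemma integrableOn_eval_mul {d : ℕ} {w : EuclideanSpace ℝ (Fin d) → ℝ}
    (hw : IntegrableOn w (Metric.closedBall 0 1)) (P Q : MvPolynomial (Fin d) ℝ) :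
    IntegrableOn (fun u : EuclideanSpace ℝ (Fin d) => eval (u : Fin d → ℝ) P * eval u Q * w u)
      (Metric.closedBall 0 1) :=
  IntegrableOn.continuousOn_mul
    ((continuous_eval_euclidean P).mul (continuous_eval_euclidean Q)).continuousOn hw
    (isCompact_closedBall _ _)

/-- A polynomial whose square integrates to zero against a weight positive on the open ball
vanishes on the open ball by continuity, and the ball contains a product of infinite sets, which is
enough to make the polynomial zero. -/
lemma eq_zero_of_integral_sq {d : ℕ} {w : EuclideanSpace ℝ (Fin d) → ℝ}
    (hw : IntegrableOn w (Metric.closedBall 0 1)) (hw0 : ∀ u ∈ Metric.closedBall 0 1, 0 ≤ w u)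
    (hw1 : ∀ u ∈ Metric.ball 0 1, 0 < w u) (R : MvPolynomial (Fin d) ℝ)
    (hR : ∫ u in Metric.closedBall (0 : EuclideanSpace ℝ (Fin d)) 1,
      eval u R * eval u R * w u = 0) : R = 0 := by
  rw [setIntegral_eq_zero_iff_of_nonneg_ae _ (integrableOn_eval_mul hw R R)] at hR
  swap
  · exact (ae_restrict_mem measurableSet_closedBall).mono fun u hu =>
      mul_nonneg (mul_self_nonneg _) (hw0 u hu)
  have h1 : (fun u : EuclideanSpace ℝ (Fin d) => eval (u : Fin d → ℝ) R)
      =ᵐ[volume.restrict (Metric.ball 0 1)] fun _ => 0 := by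
    filter_upwards [ae_restrict_of_ae_restrict_of_subset Metric.ball_subset_closedBall hR,
      ae_restrict_mem measurableSet_ball] with u hu hub
    simpa [(hw1 u hub).ne'] using hu
  have h2 := Measure.eqOn_open_of_ae_eq h1 Metric.isOpen_ball
    (continuous_eval_euclidean R).continuousOn continuousOn_const
  -- the sup-norm balls of `Fin d → ℝ` are products of intervals
  have h3 : IsOpen ((WithLp.toLp 2 : (Fin d → ℝ) → EuclideanSpace ℝ (Fin d)) ⁻¹'
      Metric.ball 0 1) := Metric.isOpen_ball.preimage (PiLp.continuous_toLp 2 _)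
  obtain ⟨ε, hε, hsub⟩ := Metric.isOpen_iff.1 h3 0 (by simp)
  refine MvPolynomial.funext_set (fun _ => Set.Ioo (-ε) ε)
    (fun _ => Set.Ioo_infinite (by linarith)) fun x hx => ?_
  have hx' : x ∈ Metric.ball (0 : Fin d → ℝ) ε := by
    rw [mem_ball_zero_iff, pi_norm_lt_iff hε]
    intro i
    exact abs_lt.2 (hx i trivial)
  simpa using h2 (hsub hx')

/-- A polynomial of degree at most `m` that is orthogonal on the ball to all polynomials of
lower degree, for a centrally symmetric weight `w`, has no homogeneous component of degree `i < m`
with `m - i` odd. -/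
lemma parity_part_eq_zero {d : ℕ} {w : EuclideanSpace ℝ (Fin d) → ℝ}
    (hw : IntegrableOn w (Metric.closedBall 0 1)) (hw0 : ∀ u ∈ Metric.closedBall 0 1, 0 ≤ w u)
    (hw1 : ∀ u ∈ Metric.ball 0 1, 0 < w u) (hneg : ∀ u, w (-u) = w u) {m : ℕ}
    {P : MvPolynomial (Fin d) ℝ} (hP : P.totalDegree ≤ m)
    (hlow : ∀ Q : MvPolynomial (Fin d) ℝ, Q.totalDegree < m →
        ∫ u in Metric.closedBall (0 : EuclideanSpace ℝ (Fin d)) 1, eval u P * eval u Q * w u = 0) :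
    ∑ i ∈ (Finset.range m).filter (fun i => Odd (m - i)), homogeneousComponent i P = 0 := by
  rcases Nat.eq_zero_or_pos m with rfl | hm
  · simp
  set R := ∑ i ∈ (Finset.range m).filter (fun i => Odd (m - i)), homogeneousComponent i P with hRdef
  have hRdeg : R.totalDegree < m := by
    have : R.totalDegree ≤ m - 1 := by
      refine totalDegree_finsetSum_le fun i hi => ?_
      have : i < m := by simpa using (Finset.mem_filter.1 hi).1
      exact (homogeneousComponent_isHomogeneous i P).totalDegree_le.trans (by lia)
    lia
  have hevneg : ∀ (i : ℕ) (u : Fin d → ℝ), eval (-u) (homogeneousComponent i P)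
      = (-1) ^ i * eval u (homogeneousComponent i P) := fun i u => by
    rw [← eval_smul_of_isHomogeneous (homogeneousComponent_isHomogeneous i P)]; simp
  have hRP : ∀ u : Fin d → ℝ, eval u R = (eval u P - (-1) ^ m * eval (-u) P) / 2 := by
    intro u
    conv_rhs => rw [eq_sum_homogeneousComponent hP]
    simp only [map_sum, hRdef, hevneg, Finset.mul_sum]
    rw [← Finset.sum_sub_distrib, Finset.sum_div, Finset.sum_range_succ, Finset.sum_filter]
    have : (-1 : ℝ) ^ m * (-1) ^ m = 1 := by rw [← mul_pow]; simp
    rw [← mul_assoc, this, one_mul, sub_self, zero_div, add_zero]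
    refine Finset.sum_congr rfl fun i hi => ?_
    have hi : i < m := by simpa using hi
    have h2 : (-1 : ℝ) ^ m * (-1) ^ i = (-1) ^ (m - i) := by
      have h3 : (-1 : ℝ) ^ i * (-1) ^ i = 1 := by rw [← mul_pow]; simp
      conv_lhs => rw [← Nat.sub_add_cancel hi.le, pow_add, mul_assoc, h3, mul_one]
    rw [← mul_assoc, h2]
    split_ifs with h
    · rw [h.neg_one_pow]; ring
    · rw [(Nat.not_odd_iff_even.1 h).neg_one_pow]; ring
  have hpm : (-1 : ℝ) ^ m * (-1) ^ m = 1 := by rw [← mul_pow]; simp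
  have hRneg : ∀ u : Fin d → ℝ, eval (-u) R = - (-1) ^ m * eval u R := by
    intro u
    rw [hRP, hRP, neg_neg]
    linear_combination (- (1 / 2) * eval (-u) P) * hpm
  have hI := hlow R hRdeg
  have hI' : ∫ u in Metric.closedBall (0 : EuclideanSpace ℝ (Fin d)) 1,
      eval (-u) P * eval (-u) R * w u = 0 := by
    have := Measure.setIntegral_comp_smul volume
      (fun u : EuclideanSpace ℝ (Fin d) => eval u P * eval u R * w u)
      (Metric.closedBall 0 1) (R := -1) (by norm_num)
    rw [smul_unitClosedBall, norm_neg, norm_one, hI, smul_zero] at this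
    simpa [hneg] using this
  refine eq_zero_of_integral_sq hw hw0 hw1 R ?_
  have hcomb : ∀ u : EuclideanSpace ℝ (Fin d), eval u R * eval u R * w u
      = (1 / 2) * (eval u P * eval u R * w u) +
        (1 / 2) * (eval (-u) P * eval (-u) R * w u) := by
    intro u
    have e1 := hRneg u
    have e2 := hRP u
    simp only [WithLp.ofLp_neg]
    rw [e1]
    linear_combination (eval u R * w u) * e2
  simp_rw [hcomb]
  have i1 := integrableOn_eval_mul hw P R
  have i2 : IntegrableOn (fun u : EuclideanSpace ℝ (Fin d) =>
      eval (-u) P * eval (-u) R * w u) (Metric.closedBall 0 1) :=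
    IntegrableOn.continuousOn_mul
      (((continuous_eval_euclidean P).comp continuous_neg).mul
        ((continuous_eval_euclidean R).comp continuous_neg)).continuousOn hw
      (isCompact_closedBall _ _)
  rw [integral_add (i1.const_mul _) (i2.const_mul _), integral_const_mul, integral_const_mul,
    hI, hI']
  simp

/-- If `P` only has homogeneous components `P_i` with `m - i` even, then
`√t ^ m * P(x / √t) = ∑ i, t ^ ((m - i) / 2) * P_i(x)` is a polynomial in `(x, t)` of degree at most
`m`; the factor `p(1 - 2t)` adds at most `natDegree p`. -/
lemma exists_homogenization {d m j : ℕ} {P : MvPolynomial (Fin d) ℝ} (hP : P.totalDegree ≤ m)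
    (hpar : ∑ i ∈ (Finset.range m).filter (fun i => Odd (m - i)), homogeneousComponent i P = 0)
    (p : Polynomial ℝ) (hp : p.natDegree ≤ j) :
    ∃ Q : MvPolynomial (Fin (d + 1)) ℝ, Q.totalDegree ≤ j + m ∧
      ∀ (x : Fin d → ℝ) (t : ℝ), 0 < t → eval (Fin.snoc x t : Fin (d + 1) → ℝ) Q =
        p.eval (1 - 2 * t) * √t ^ m * eval ((√t)⁻¹ • x) P := by
  let S := (Finset.range (m + 1)).filter (fun i => ¬ Odd (m - i))
  have hPS : P = ∑ i ∈ S, homogeneousComponent i P := by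
    conv_lhs => rw [eq_sum_homogeneousComponent hP]
    rw [← Finset.sum_filter_add_sum_filter_not _ (fun i => Odd (m - i))]
    have : (Finset.range (m + 1)).filter (fun i => Odd (m - i))
        = (Finset.range m).filter (fun i => Odd (m - i)) := by
      ext i
      simp only [Finset.mem_filter, Finset.mem_range]
      constructor
      · rintro ⟨h1, h2⟩
        have := h2.pos
        exact ⟨by lia, h2⟩
      · rintro ⟨h1, h2⟩
        exact ⟨by lia, h2⟩
    rw [this, hpar, zero_add]
  refine ⟨(∑ i ∈ Finset.range (j + 1), C (p.coeff i) * (1 - C 2 * X (Fin.last d)) ^ i) *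
    ∑ i ∈ S, X (Fin.last d) ^ ((m - i) / 2) *
      rename Fin.castSucc (homogeneousComponent i P), ?_, ?_⟩
  · refine (totalDegree_mul _ _).trans (add_le_add ?_ ?_)
    · refine totalDegree_finsetSum_le fun i hi => ?_
      refine (totalDegree_mul _ _).trans ?_
      have h1 : (1 - C 2 * X (Fin.last d) : MvPolynomial (Fin (d + 1)) ℝ).totalDegree ≤ 1 := by
        refine (totalDegree_sub _ _).trans (max_le (by simp) ?_)
        exact (totalDegree_mul _ _).trans (by simp)
      have h2 := (totalDegree_pow (1 - C 2 * X (Fin.last d) : MvPolynomial (Fin (d + 1)) ℝ) i)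
      have h3 : i ≤ j := by simpa [Nat.lt_succ_iff] using hi
      simp only [totalDegree_C, zero_add]
      nlinarith
    · refine totalDegree_finsetSum_le fun i hi => ?_
      have h3 : i ≤ m := by simpa [Nat.lt_succ_iff] using (Finset.mem_filter.1 hi).1
      have h4 := totalDegree_rename_le (Fin.castSucc : Fin d → Fin (d + 1))
        (homogeneousComponent i P)
      have h5 := (homogeneousComponent_isHomogeneous i P).totalDegree_le
      have h6 := totalDegree_X_pow (R := ℝ) (Fin.last d) ((m - i) / 2)
      refine (totalDegree_mul _ _).trans ?_
      rw [h6]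
      lia
  · intro x t ht
    have hs : 0 < √t := Real.sqrt_pos.2 ht
    rw [map_mul, mul_assoc]
    congr 1
    · rw [Polynomial.eval_eq_sum_range' (Nat.lt_succ_of_le hp)]
      simp
    · conv_rhs => rw [hPS]
      simp only [map_sum, Finset.mul_sum]
      refine Finset.sum_congr rfl fun i hi => ?_
      have h3 : i ≤ m := by simpa [Nat.lt_succ_iff] using (Finset.mem_filter.1 hi).1
      obtain ⟨r, hr⟩ := Nat.not_odd_iff_even.1 (Finset.mem_filter.1 hi).2
      rw [eval_smul_of_isHomogeneous (homogeneousComponent_isHomogeneous i P)]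
      have hc : (Fin.snoc x t : Fin (d + 1) → ℝ) ∘ Fin.castSucc = x := by
        ext i; simp
      rw [map_mul, map_pow, eval_X, Fin.snoc_last, eval_rename, hc, hr, ← mul_assoc]
      congr 1
      have hm : m = r + r + i := by lia
      have hr2 : (r + r) / 2 = r := by lia
      rw [hr2, hm, pow_add, pow_add, mul_assoc, ← mul_pow √t _ i, mul_inv_cancel₀ hs.ne', one_pow,
        mul_one, ← mul_pow, Real.mul_self_sqrt ht.le]

/-! ### Jacobi polynomials -/

/-- The two endpoint singularities are treated separately on `[-1, 0]` and `[0, 1]`, where the other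
factor is continuous; the reflection `s ↦ -s` exchanges the two cases. -/
lemma integrableOn_jacobiWeight {a b : ℝ} (ha : -1 < a) (hb : -1 < b) :
    IntegrableOn (fun s : ℝ => (1 - s) ^ a * (1 + s) ^ b) (Set.Icc (-1) 1) := by
  have key : ∀ {a b : ℝ}, -1 < b →
      IntegrableOn (fun s : ℝ => (1 - s) ^ a * (1 + s) ^ b) (Set.Icc (-1) 0) := by
    intro a b hb
    refine IntegrableOn.continuousOn_mul ?_ ?_ isCompact_Icc
    -- the base `1 - s` stays away from zero on `[-1, 0]`, so the sign of `a` is irrelevant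
    · exact ContinuousOn.rpow_const (by fun_prop) fun s hs => Or.inl (by linarith [hs.2])
    · rw [integrableOn_Icc_iff_integrableOn_Ioc,
        ← intervalIntegrable_iff_integrableOn_Ioc_of_le (by norm_num)]
      have := (intervalIntegral.intervalIntegrable_rpow' (a := 0) (b := 1) hb).comp_add_left 1
      simpa using this
  rw [← Set.Icc_union_Icc_eq_Icc (b := 0) (by norm_num) (by norm_num)]
  refine (key hb).union ?_
  have h := (key (a := b) ha)
  rw [← (Measure.measurePreserving_neg (volume : Measure ℝ)).integrableOn_comp_preimage
    (Homeomorph.neg ℝ).measurableEmbedding] at h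
  simp only [Function.comp_def, sub_neg_eq_add, ← sub_eq_add_neg, Set.neg_preimage, Set.neg_Icc, neg_zero, neg_neg] at h
  simpa only [mul_comm] using h

lemma integrableOn_polynomial_mul_jacobiWeight {a b : ℝ} (ha : -1 < a) (hb : -1 < b)
    (p : Polynomial ℝ) :
    IntegrableOn (fun s : ℝ => p.eval s * ((1 - s) ^ a * (1 + s) ^ b)) (Set.Ioo (-1) 1) :=
  ((integrableOn_jacobiWeight ha hb).continuousOn_mul p.continuous.continuousOn
    isCompact_Icc).mono_set Set.Ioo_subset_Icc_self

lemma IsJacobi.integral_mul_eq_zero {a b : ℝ} (ha : -1 < a) (hb : -1 < b) {n : ℕ}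
    {p : Polynomial ℝ} (hp : IsJacobi a b n p) {q : Polynomial ℝ} (hq : q.natDegree < n) :
    ∫ s in Set.Ioo (-1 : ℝ) 1, p.eval s * q.eval s * ((1 - s) ^ a * (1 + s) ^ b) = 0 := by
  have : ∀ s : ℝ, p.eval s * q.eval s * ((1 - s) ^ a * (1 + s) ^ b) =
      ∑ k ∈ Finset.range n, q.coeff k * (p.eval s * s ^ k * (1 - s) ^ a * (1 + s) ^ b) := by
    intro s
    rw [Polynomial.eval_eq_sum_range' hq, Finset.mul_sum, Finset.sum_mul]
    exact Finset.sum_congr rfl fun k _ => by ring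
  simp_rw [this]
  rw [integral_finsetSum]
  · refine Finset.sum_eq_zero fun k hk => ?_
    rw [integral_const_mul, hp.2 k (Finset.mem_range.1 hk), mul_zero]
  · intro k _
    have := (integrableOn_polynomial_mul_jacobiWeight ha hb (p * Polynomial.X ^ k)).const_mul
      (q.coeff k)
    simpa only [Polynomial.eval_mul, Polynomial.eval_pow, Polynomial.eval_X, mul_assoc] using this

lemma integral_jacobi_mul_eq_zero {a b : ℝ} (ha : -1 < a) (hb : -1 < b) {i j : ℕ} (hij : i ≠ j)
    {p q : Polynomial ℝ} (hp : IsJacobi a b i p) (hq : IsJacobi a b j q) :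
    ∫ s in Set.Ioo (-1 : ℝ) 1, p.eval s * q.eval s * ((1 - s) ^ a * (1 + s) ^ b) = 0 := by
  rcases hij.lt_or_gt with h | h
  · have := hq.integral_mul_eq_zero ha hb (q := p)
      (by rwa [Polynomial.natDegree_eq_of_degree_eq_some hp.1])
    simpa only [mul_comm (p.eval _)] using this
  · exact hp.integral_mul_eq_zero ha hb
      (by rwa [Polynomial.natDegree_eq_of_degree_eq_some hq.1])

lemma integral_sq_jacobiWeight_pos {a b : ℝ} (ha : -1 < a) (hb : -1 < b) {p : Polynomial ℝ}
    (hp : p ≠ 0) :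
    0 < ∫ s in Set.Ioo (-1 : ℝ) 1, p.eval s * p.eval s * ((1 - s) ^ a * (1 + s) ^ b) := by
  have hw : ∀ s ∈ Set.Ioo (-1 : ℝ) 1, 0 < (1 - s) ^ a * (1 + s) ^ b := fun s hs =>
    mul_pos (rpow_pos_of_pos (by linarith [hs.2]) _) (rpow_pos_of_pos (by linarith [hs.1]) _)
  rw [setIntegral_pos_iff_support_of_nonneg_ae]
  · have h1 : Set.Ioo (-1 : ℝ) 1 \ (p.roots.toFinset : Set ℝ) ⊆ (Function.support fun s : ℝ =>
        p.eval s * p.eval s * ((1 - s) ^ a * (1 + s) ^ b)) ∩ Set.Ioo (-1) 1 := by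
      rintro s ⟨hs, hr⟩
      refine ⟨?_, hs⟩
      have hr' : p.eval s ≠ 0 := by simpa [hp] using hr
      exact mul_ne_zero (mul_ne_zero hr' hr') (hw s hs).ne'
    refine lt_of_lt_of_le ?_ (measure_mono h1)
    rw [measure_sdiff_null (Finset.measure_zero _ _)]
    simp
  · exact (ae_restrict_mem measurableSet_Ioo).mono fun s hs =>
      mul_nonneg (mul_self_nonneg _) (hw s hs).le
  · simpa using integrableOn_polynomial_mul_jacobiWeight ha hb (p * p)

lemma integral_Ioo_comp_one_sub_two_mul (f : ℝ → ℝ) :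
    ∫ t in Set.Ioo (0 : ℝ) 1, f (1 - 2 * t) = (1 / 2) * ∫ s in Set.Ioo (-1 : ℝ) 1, f s := by
  have h := intervalIntegral.integral_comp_sub_mul (a := 0) (b := 1) f (two_ne_zero' ℝ) 1
  rw [intervalIntegral.integral_of_le (by norm_num), intervalIntegral.integral_of_le (by norm_num),
    integral_Ioc_eq_integral_Ioo, integral_Ioc_eq_integral_Ioo] at h
  rw [h]
  norm_num

lemma integral_jacobi_Ioo_zero_one (a b : ℝ) (p q : Polynomial ℝ) :
    ∫ t in Set.Ioo (0 : ℝ) 1, p.eval (1 - 2 * t) * q.eval (1 - 2 * t) * (t ^ a * (1 - t) ^ b) =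
      (1 / 2) * ((1 / 2) ^ a * (1 / 2) ^ b) *
        ∫ s in Set.Ioo (-1 : ℝ) 1, p.eval s * q.eval s * ((1 - s) ^ a * (1 + s) ^ b) := by
  rw [mul_assoc, ← integral_const_mul, ← integral_Ioo_comp_one_sub_two_mul]
  refine setIntegral_congr_fun measurableSet_Ioo fun t ht => ?_
  have h1 : (1 / 2 : ℝ) ^ a * (1 - (1 - 2 * t)) ^ a = t ^ a := by
    rw [← mul_rpow (by norm_num) (by linarith [ht.1])]; congr 1; ring
  have h2 : (1 / 2 : ℝ) ^ b * (1 + (1 - 2 * t)) ^ b = (1 - t) ^ b := by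
    rw [← mul_rpow (by norm_num) (by linarith [ht.2])]; congr 1; ring
  simp only [← h1, ← h2]
  ring

/-! ### Integrals over the paraboloid -/

/-- The substitution `x = √t • u` in the integral over the slice at height `t`. -/
lemma paraboloid_slice_integral (d : ℕ) (J : ℕ → ℝ → ℝ → Polynomial ℝ)
    (Pb : ℕ → (Fin d → ℕ) → MvPolynomial (Fin d) ℝ) (μ α β : ℝ) (n m n' m' : ℕ)
    (k k' : Fin d → ℕ) {t : ℝ} (ht : 0 < t) :
    ∫ x in Metric.closedBall (0 : EuclideanSpace ℝ (Fin d)) (Real.sqrt t),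
        paraboloidFun d J Pb μ α β n m k x t * paraboloidFun d J Pb μ α β n' m' k' x t *
          ((t - ‖x‖ ^ 2) ^ (μ - 1 / 2)) =
      (J (n - m) (m + μ + α + (d - 1) / 2) β).eval (1 - 2 * t) *
        (J (n' - m') (m' + μ + α + (d - 1) / 2) β).eval (1 - 2 * t) *
        (√t ^ m * √t ^ m' * √t ^ d * t ^ (μ - 1 / 2)) *
        ∫ u in Metric.closedBall (0 : EuclideanSpace ℝ (Fin d)) 1,
          eval u (Pb m k) * eval u (Pb m' k') * (1 - ‖u‖ ^ 2) ^ (μ - 1 / 2) := by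
  have hs : 0 < √t := Real.sqrt_pos.2 ht
  have h := Measure.setIntegral_comp_smul_of_pos volume
    (fun x : EuclideanSpace ℝ (Fin d) =>
      paraboloidFun d J Pb μ α β n m k x t * paraboloidFun d J Pb μ α β n' m' k' x t *
          ((t - ‖x‖ ^ 2) ^ (μ - 1 / 2))) (Metric.closedBall 0 1) hs
  rw [smul_unitClosedBall_of_nonneg hs.le, finrank_euclideanSpace_fin, smul_eq_mul,
    eq_inv_mul_iff_mul_eq₀ (pow_ne_zero _ hs.ne')] at h
  rw [← h, ← integral_const_mul, ← integral_const_mul]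
  refine setIntegral_congr_fun measurableSet_closedBall fun u hu => ?_
  have hu1 : ‖u‖ ≤ 1 := by simpa using hu
  have hw : (t - ‖√t • u‖ ^ 2) ^ (μ - 1 / 2) = t ^ (μ - 1 / 2) * (1 - ‖u‖ ^ 2) ^ (μ - 1 / 2) := by
    rw [← mul_rpow ht.le (by nlinarith [norm_nonneg u]), norm_smul, Real.norm_of_nonneg hs.le,
      mul_pow, Real.sq_sqrt ht.le]
    congr 1; ring
  have hx : (√t)⁻¹ • √t • u = u := inv_smul_smul₀ hs.ne' u
  simp only [paraboloidFun, hw, hx]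
  ring

/-- The exponents are those produced on a slice by the two factors `√t ^ m`, the Jacobian
`√t ^ d`, and the two weights `(t - ‖x‖²) ^ (μ - 1/2)` and `t ^ α`. -/
lemma radial_power {t : ℝ} (ht : 0 < t) (d m : ℕ) (μ α : ℝ) :
    √t ^ m * √t ^ m * √t ^ d * t ^ (μ - 1 / 2) * t ^ α = t ^ (m + μ + α + ((d : ℝ) - 1) / 2) := by
  rw [← mul_pow, Real.mul_self_sqrt ht.le, Real.sqrt_eq_rpow, ← rpow_natCast, ← rpow_natCast,
    ← rpow_mul ht.le, ← rpow_add ht, ← rpow_add ht, ← rpow_add ht]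
  congr 1; ring

/-- The double integral over the paraboloid factors when the two ball polynomials have the same
degree `m`: the powers of `t` produced by the scaling `x = √t u` combine with `t ^ α` into the
Jacobi weight of parameter `m + μ + α + (d - 1) / 2`. -/
lemma paraboloid_integral (d : ℕ) (J : ℕ → ℝ → ℝ → Polynomial ℝ)
    (Pb : ℕ → (Fin d → ℕ) → MvPolynomial (Fin d) ℝ) (μ α β : ℝ) (n m n' : ℕ)
    (k k' : Fin d → ℕ) :
    ∫ t in Set.Ioo (0 : ℝ) 1,
      (∫ x in Metric.closedBall (0 : EuclideanSpace ℝ (Fin d)) (Real.sqrt t),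
        paraboloidFun d J Pb μ α β n m k x t * paraboloidFun d J Pb μ α β n' m k' x t *
          ((t - ‖x‖ ^ 2) ^ (μ - 1 / 2))) * (t ^ α * (1 - t) ^ β) =
      (∫ u in Metric.closedBall (0 : EuclideanSpace ℝ (Fin d)) 1,
          eval u (Pb m k) * eval u (Pb m k') * (1 - ‖u‖ ^ 2) ^ (μ - 1 / 2)) *
      ((1 / 2) * ((1 / 2) ^ (m + μ + α + ((d : ℝ) - 1) / 2) * (1 / 2) ^ β) *
        ∫ s in Set.Ioo (-1 : ℝ) 1, (J (n - m) (m + μ + α + (d - 1) / 2) β).eval s *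
          (J (n' - m) (m + μ + α + (d - 1) / 2) β).eval s *
          ((1 - s) ^ (m + μ + α + ((d : ℝ) - 1) / 2) * (1 + s) ^ β)) := by
  rw [← integral_jacobi_Ioo_zero_one, ← integral_const_mul]
  refine setIntegral_congr_fun measurableSet_Ioo fun t ht => ?_
  simp only [paraboloid_slice_integral d J Pb μ α β n m n' m k k' ht.1]
  rw [← radial_power ht.1]
  ring

/-- For `d ≥ 2`, `μ > −1/2`, `α > −(μ+(d+1)/2)`, `β > −1`, the functions
`Q_{m,k}^n(x,t) = P_{n−m}^{(m+μ+α+(d−1)/2,β)}(1−2t) t^{m/2} P_k^m(x/√t)` are polynomials of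
degree at most `n` in `(x,t)` which are mutually orthogonal on the solid paraboloid
`{(x,t) : ‖x‖² ≤ t, 0 ≤ t ≤ 1}` with respect to `t^α (1−t)^β (t−‖x‖²)^{μ−1/2}`,
with strictly positive norms. -/
theorem solid_paraboloid_orthogonality
    (d : ℕ) (hd : 2 ≤ d) (μ α β : ℝ)
    (hμ : -(1 / 2 : ℝ) < μ) (hα : -(μ + ((d : ℝ) + 1) / 2) < α) (hβ : -1 < β)
    (J : ℕ → ℝ → ℝ → Polynomial ℝ)
    (hJ : ∀ (j : ℕ) (a b : ℝ), -1 < a → -1 < b → IsJacobi a b j (J j a b))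
    -- an orthonormal basis `{P_k^m : |k| = m}` of orthogonal polynomials on the ball
    -- with respect to `ϖ_μ(x) = (1−‖x‖²)^{μ−1/2}`
    (Pb : ℕ → (Fin d → ℕ) → MvPolynomial (Fin d) ℝ)
    (hPdeg : ∀ m (k : Fin d → ℕ), (∑ i, k i) = m → (Pb m k).totalDegree = m)
    (hPlow : ∀ m (k : Fin d → ℕ), (∑ i, k i) = m →
      ∀ Q : MvPolynomial (Fin d) ℝ, Q.totalDegree < m →
        ∫ u in Metric.closedBall (0 : EuclideanSpace ℝ (Fin d)) 1,
          MvPolynomial.eval u (Pb m k) * MvPolynomial.eval u Q *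
            (1 - ‖u‖ ^ 2) ^ (μ - 1 / 2) = 0)
    (hPorth : ∀ m (k k' : Fin d → ℕ), (∑ i, k i) = m → (∑ i, k' i) = m →
      ∫ u in Metric.closedBall (0 : EuclideanSpace ℝ (Fin d)) 1,
        MvPolynomial.eval u (Pb m k) * MvPolynomial.eval u (Pb m k') *
          (1 - ‖u‖ ^ 2) ^ (μ - 1 / 2) = if k = k' then 1 else 0) :
    ∀ n m n' m' : ℕ, ∀ k k' : Fin d → ℕ,
      m ≤ n → (∑ i, k i) = m → m' ≤ n' → (∑ i, k' i) = m' →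
      -- `Q_{m,k}^n` is a polynomial of total degree at most `n`
      (∃ Q : MvPolynomial (Fin (d + 1)) ℝ, Q.totalDegree ≤ n ∧
        ∀ (x : EuclideanSpace ℝ (Fin d)) (t : ℝ), 0 < t →
          MvPolynomial.eval (Fin.snoc (x : Fin d → ℝ) t) Q =
            paraboloidFun d J Pb μ α β n m k x t) ∧
      -- orthogonality
      (((n, m, k) ≠ (n', m', k')) →
        ∫ t in Set.Ioo (0 : ℝ) 1,
          (∫ x in Metric.closedBall (0 : EuclideanSpace ℝ (Fin d)) (Real.sqrt t),
            paraboloidFun d J Pb μ α β n m k x t *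
            paraboloidFun d J Pb μ α β n' m' k' x t *
            ((t - ‖x‖ ^ 2) ^ (μ - 1 / 2))) *
          (t ^ α * (1 - t) ^ β) = 0) ∧
      -- positivity
      (0 < ∫ t in Set.Ioo (0 : ℝ) 1,
          (∫ x in Metric.closedBall (0 : EuclideanSpace ℝ (Fin d)) (Real.sqrt t),
            paraboloidFun d J Pb μ α β n m k x t ^ 2 *
            ((t - ‖x‖ ^ 2) ^ (μ - 1 / 2))) *
          (t ^ α * (1 - t) ^ β)) := by
  -- `P_0` is a constant of norm one, so the weight itself must be integrable on the ball.
  have hw : IntegrableOn (fun u : EuclideanSpace ℝ (Fin d) => (1 - ‖u‖ ^ 2) ^ (μ - 1 / 2))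
      (Metric.closedBall 0 1) := by
    have h1 := hPorth 0 0 0 (by simp) (by simp)
    rw [if_pos rfl, totalDegree_eq_zero_iff_eq_C.1 (hPdeg 0 0 (by simp))] at h1
    simp only [eval_C, integral_const_mul] at h1
    exact Integrable.of_integral_ne_zero (right_ne_zero_of_mul (h1 ▸ one_ne_zero))
  have hw0 : ∀ u ∈ Metric.closedBall (0 : EuclideanSpace ℝ (Fin d)) 1,
      0 ≤ (1 - ‖u‖ ^ 2) ^ (μ - 1 / 2) := fun u hu => by
    have hu1 : ‖u‖ ≤ 1 := by simpa using hu
    exact rpow_nonneg (by nlinarith [norm_nonneg u]) _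
  have hw1 : ∀ u ∈ Metric.ball (0 : EuclideanSpace ℝ (Fin d)) 1,
      0 < (1 - ‖u‖ ^ 2) ^ (μ - 1 / 2) := fun u hu => by
    have hu1 : ‖u‖ < 1 := by simpa using hu
    exact rpow_pos_of_pos (by nlinarith [norm_nonneg u]) _
  intro n m n' m' k k' hmn hk hmn' hk'
  have ha : (-1 : ℝ) < m + μ + α + ((d : ℝ) - 1) / 2 := by
    have : (0 : ℝ) ≤ m := m.cast_nonneg
    linarith
  refine ⟨?_, ?_, ?_⟩
  · have hpar := parity_part_eq_zero hw hw0 hw1 (fun u => by rw [norm_neg]) (hPdeg m k hk).le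
      (hPlow m k hk)
    obtain ⟨Q, hQ, hQe⟩ := exists_homogenization (hPdeg m k hk).le hpar
      (J (n - m) (m + μ + α + (d - 1) / 2) β)
      (Polynomial.natDegree_eq_of_degree_eq_some (hJ (n - m) _ β ha hβ).1).le
    exact ⟨Q, by lia, fun x t ht => hQe x t ht⟩
  · intro hne
    by_cases hm : m = m'
    · subst hm
      rw [paraboloid_integral, hPorth m k k' hk hk']
      split_ifs with hkk
      · have hnn : n - m ≠ n' - m := fun h => hne (by rw [hkk, show n = n' by lia])
        rw [integral_jacobi_mul_eq_zero ha hβ hnn (hJ _ _ _ ha hβ) (hJ _ _ _ ha hβ)]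
        simp
      · rw [zero_mul]
    · have h0 : ∫ u in Metric.closedBall (0 : EuclideanSpace ℝ (Fin d)) 1,
          eval u (Pb m k) * eval u (Pb m' k') * (1 - ‖u‖ ^ 2) ^ (μ - 1 / 2) = 0 := by
        rcases Ne.lt_or_gt hm with h | h
        · have := hPlow m' k' hk' (Pb m k) (by rwa [hPdeg m k hk])
          simpa only [mul_comm (eval _ (Pb m k))] using this
        · exact hPlow m k hk (Pb m' k') (by rwa [hPdeg m' k' hk'])
      refine setIntegral_eq_zero_of_forall_eq_zero fun t ht => ?_
      rw [paraboloid_slice_integral d J Pb μ α β n m n' m' k k' ht.1, h0, mul_zero, zero_mul]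
  · simp only [sq (paraboloidFun _ _ _ _ _ _ _ _ _ _ _)]
    rw [paraboloid_integral, hPorth m k k hk hk, if_pos rfl, one_mul]
    refine mul_pos (by positivity) (integral_sq_jacobiWeight_pos ha hβ ?_)
    rintro h
    have := (hJ (n - m) _ β ha hβ).1
    rw [h, Polynomial.degree_zero] at this
    simp at this
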